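/- arXiv:2103.10004 — 7 statements merged into one kernel-verified Lean document; each statement's English description precedes it below -/
import Mathlib

section
/- For m = 4 and m = 5, the covering functional of the three-dimensional unit cross-polytope satisfies γ_m(K₁) = 1; that is, γ₄(K₁) = 1 and γ₅(K₁) = 1. -/
open Pointwise

/-- The unit cross-polytope in ℝ³. -/
def K1 : Set (Fin 3 → ℝ) := {x | |x 0| + |x 1| + |x 2| ≤ 1}

/-- `K1` can be covered by `m` translates of `lam • K1`. -/
def CoversWith (m : ℕ) (lam : ℝ) : Prop :=
  ∃ u : Fin m → (Fin 3 → ℝ), K1 ⊆ ⋃ i, (u i +ᵥ lam • K1)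

/-!
The `2n` vertices `±eᵢ` of the `n`-dimensional cross-polytope are pairwise at `ℓ¹`-distance two,
whereas a homothet of ratio less than one is an `ℓ¹`-ball of diameter less than two. Such a homothet
contains at most one vertex, so fewer than `2n` of them cannot cover the cross-polytope.
-/

section CoveringRatio

open Metric

variable {E F : Type*} {m : ℕ} {lam : ℝ}

/-- `lam` is a covering ratio of `K` for `m` if `m` translates of `lam • K` cover `K`; the covering
functional `γ_m(K)` is the least positive covering ratio. -/
def IsCoveringRatio [AddCommGroup E] [Module ℝ E] (m : ℕ) (K : Set E) (lam : ℝ) : Prop :=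
  ∃ u : Fin m → E, K ⊆ ⋃ i, (u i +ᵥ lam • K)

lemma isCoveringRatio_one [AddCommGroup E] [Module ℝ E] (hm : 0 < m) (K : Set E) :
    IsCoveringRatio m K 1 :=
  ⟨0, Set.subset_iUnion_of_subset ⟨0, hm⟩ (by simp)⟩

lemma IsCoveringRatio.image [AddCommGroup E] [Module ℝ E] [AddCommGroup F] [Module ℝ F]
    {K : Set E} (h : IsCoveringRatio m K lam) (f : E →ₗ[ℝ] F) :
    IsCoveringRatio m (f '' K) lam := by
  obtain ⟨u, hu⟩ := h
  refine ⟨f ∘ u, (Set.image_mono hu).trans_eq ?_⟩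
  simp only [Set.image_iUnion, Function.comp_apply, ← Set.image_smul, ← Set.image_vadd,
    Set.image_image, vadd_eq_add, map_add, map_smul]

variable [NormedAddCommGroup E] [NormedSpace ℝ E]

lemma IsCoveringRatio.externalCoveringNumber_le
    (h : IsCoveringRatio m (closedBall (0 : E) 1) lam) :
    externalCoveringNumber ‖lam‖₊ (closedBall (0 : E) 1) ≤ m := by
  obtain ⟨u, hu⟩ := h
  have hcover : IsCover ‖lam‖₊ (closedBall (0 : E) 1) (Set.range u) := by
    rw [isCover_iff_subset_iUnion_closedBall]
    simpa only [Set.biUnion_range, coe_nnnorm, smul_unitClosedBall, vadd_closedBall_zero] using hu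
  calc
    externalCoveringNumber ‖lam‖₊ (closedBall (0 : E) 1) ≤ (Set.range u).encard :=
      hcover.externalCoveringNumber_le_encard
    _ ≤ (Set.univ : Set (Fin m)).encard := Set.image_univ ▸ Set.encard_image_le u _
    _ = m := by simp

lemma IsCoveringRatio.encard_le_of_isSeparated
    (h : IsCoveringRatio m (closedBall (0 : E) 1) lam) {S : Set E} (hS : S ⊆ closedBall 0 1)
    (hsep : IsSeparated (2 * ‖lam‖₊ : NNReal) S) : S.encard ≤ m :=
  calc
    S.encard ≤ packingNumber (2 * ‖lam‖₊) (closedBall (0 : E) 1) :=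
      hsep.encard_le_packingNumber hS
    _ ≤ externalCoveringNumber ‖lam‖₊ (closedBall (0 : E) 1) :=
      packingNumber_two_mul_le_externalCoveringNumber _ _
    _ ≤ m := h.externalCoveringNumber_le

lemma IsCoveringRatio.one_le_abs_of_pairwise_two_le_dist {κ : Type*} [Fintype κ] {v : κ → E}
    (h : IsCoveringRatio m (closedBall (0 : E) 1) lam) (hv : ∀ k, ‖v k‖ ≤ 1)
    (hdist : Pairwise fun k l => 2 ≤ dist (v k) (v l)) (hm : m < Fintype.card κ) :
    1 ≤ |lam| := by
  by_contra! hlam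
  have hinj : v.Injective := fun k l hkl => by
    by_contra hne
    linarith [hdist hne, dist_eq_zero.2 hkl]
  have hsep : IsSeparated (2 * ‖lam‖₊ : NNReal) (Set.range v) := by
    rintro _ ⟨k, rfl⟩ _ ⟨l, rfl⟩ hne
    rw [edist_nndist, ENNReal.coe_lt_coe, ← NNReal.coe_lt_coe, coe_nndist, NNReal.coe_mul,
      NNReal.coe_ofNat, coe_nnnorm, Real.norm_eq_abs]
    linarith [hdist (ne_of_apply_ne v hne)]
  have hcard : (Fintype.card κ : ℕ∞) ≤ m :=
    calc
      (Fintype.card κ : ℕ∞) = ENat.card κ := ENat.card_eq_coe_fintype_card.symm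
      _ ≤ (Set.range v).encard := hinj.encard_range
      _ ≤ m := h.encard_le_of_isSeparated
        (Set.range_subset_iff.2 fun k => mem_closedBall_zero_iff.2 (hv k)) hsep
  exact hm.not_ge (Nat.cast_le.1 hcard)

end CoveringRatio

section CrossPolytope

variable {ι : Type*} [Fintype ι]

/-- The unit cross-polytope in `ℝ^ι`. -/
def crossPolytope (ι : Type*) [Fintype ι] : Set (ι → ℝ) := {x | ∑ i, |x i| ≤ 1}

lemma K1_eq_crossPolytope : K1 = crossPolytope (Fin 3) := by
  simp only [K1, crossPolytope, Fin.sum_univ_three]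

lemma toLp_image_crossPolytope :
    WithLp.toLp 1 '' crossPolytope ι = Metric.closedBall (0 : PiLp 1 fun _ : ι => ℝ) 1 :=
  calc
    WithLp.toLp 1 '' crossPolytope ι = WithLp.ofLp ⁻¹' crossPolytope ι :=
      (WithLp.equiv 1 (ι → ℝ)).symm.image_eq_preimage_symm _
    _ = Metric.closedBall 0 1 := by
      ext x
      simp [crossPolytope, PiLp.norm_eq_of_L1]

variable [DecidableEq ι]

lemma dist_piLp_one_single_of_ne {β : ι → Type*} [∀ i, SeminormedAddCommGroup (β i)] {i j : ι}
    (hij : i ≠ j) (a : β i) (b : β j) :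
    dist (PiLp.single 1 i a) (PiLp.single 1 j b) = ‖a‖ + ‖b‖ := by
  rw [PiLp.dist_eq_of_L1, Fintype.sum_eq_add i j hij]
  · simp [hij, hij.symm]
  · rintro k ⟨hki, hkj⟩
    simp [hki, hkj]

/-- The vertices `±eᵢ` of the cross-polytope, as points of `ℝ^ι` with the `ℓ¹`-norm; the unit
`p.2 : ℤˣ` is the sign. -/
noncomputable def crossPolytopeVertex (p : ι × ℤˣ) : PiLp 1 fun _ : ι => ℝ :=
  PiLp.single 1 p.1 ((p.2 : ℤ) : ℝ)

lemma norm_crossPolytopeVertex (p : ι × ℤˣ) : ‖crossPolytopeVertex p‖ = 1 := by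
  rw [crossPolytopeVertex, PiLp.norm_single, Int.norm_cast_real, Int.norm_coe_units]

lemma dist_crossPolytopeVertex {p q : ι × ℤˣ} (hpq : p ≠ q) :
    dist (crossPolytopeVertex p) (crossPolytopeVertex q) = 2 := by
  by_cases hindex : p.1 = q.1
  · have hsign : p.2 = -q.2 := Int.units_ne_iff_eq_neg.1 fun h => hpq (Prod.ext hindex h)
    have hneg : crossPolytopeVertex p = -crossPolytopeVertex q := by
      simp [crossPolytopeVertex, hindex, hsign, PiLp.single_neg]
    rw [hneg, dist_eq_norm, ← neg_add', norm_neg, ← two_smul ℝ, norm_smul,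
      norm_crossPolytopeVertex]
    norm_num
  · rw [crossPolytopeVertex, crossPolytopeVertex, dist_piLp_one_single_of_ne hindex]
    simp only [Int.norm_cast_real, Int.norm_coe_units]
    norm_num

end CrossPolytope

theorem gamma_four_and_five_eq_one_general {ι : Type*} [Fintype ι] {m : ℕ} (hm_pos : 0 < m)
    (hm_lt : m < 2 * Fintype.card ι) :
    IsLeast {lam : ℝ | 0 < lam ∧ IsCoveringRatio m (crossPolytope ι) lam} 1 := by
  classical
  refine ⟨⟨one_pos, isCoveringRatio_one hm_pos _⟩, fun lam ⟨hlam, hcov⟩ => ?_⟩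
  have hball : IsCoveringRatio m (Metric.closedBall (0 : PiLp 1 fun _ : ι => ℝ) 1) lam :=
    toLp_image_crossPolytope (ι := ι) ▸ hcov.image (WithLp.linearEquiv 1 ℝ (ι → ℝ)).symm.toLinearMap
  have hcard : m < Fintype.card (ι × ℤˣ) := by
    rwa [Fintype.card_prod, Fintype.card_units_int, mul_comm]
  rw [← abs_of_pos hlam]
  exact hball.one_le_abs_of_pairwise_two_le_dist (fun p => (norm_crossPolytopeVertex p).le)
    (fun _ _ hpq => (dist_crossPolytopeVertex hpq).ge) hcard

/-- γ₄(K₁) = 1 and γ₅(K₁) = 1. -/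
theorem gamma_four_and_five_eq_one :
    IsLeast {lam : ℝ | 0 < lam ∧ CoversWith 4 lam} 1 ∧
    IsLeast {lam : ℝ | 0 < lam ∧ CoversWith 5 lam} 1 := by
  simp only [CoversWith, K1_eq_crossPolytope]
  exact ⟨gamma_four_and_five_eq_one_general (by simp) (by simp),
    gamma_four_and_five_eq_one_general (by simp) (by simp)⟩
end

section
/- The covering functional of the three-dimensional unit cross-polytope by ten translates satisfies γ₁₀(K₁) = 3/5. -/
/-!
Everything takes place in `ℓ¹(Fin 3)`, where the translates of `lam • K1` are closed balls.

Upper bound: place balls of radius `3 / 5` at `±(2 / 5) eᵢ`. The distance from `x` to the nearer of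
the two centres on the `i`-th axis is `max (‖x‖ - 2 / 5) (‖x‖ - 2 |xᵢ| + 2 / 5)`, so a point of the
unit ball missed by these six balls satisfies `‖x‖ > 1 / 5 + 2 |xᵢ|` for every `i`. Adding two of
these inequalities shows that every coordinate exceeds `1 / 5` in absolute value, whence moving from
`x` to `(±1 / 5, ±1 / 5, 0)` costs only `‖x‖ - 2 / 5 ≤ 3 / 5`.

Lower bound: the unit ball contains eleven points at pairwise distance at least `6 / 5`, and a ball
of radius less than `3 / 5` contains at most one of them.
-/

open Pointwise

open Metric Set WithLp
open scoped NNReal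

local notation "ℓ¹(" ι ")" => PiLp 1 fun _ : ι ↦ ℝ

section CoveringNumber

variable {X : Type*} {s : Set X} {r : ℝ≥0}

theorem encard_range_le_card {α : Type*} (f : α → X) : (range f).encard ≤ ENat.card α := by
  rw [← image_univ, ← encard_univ]
  exact encard_image_le f univ

theorem encard_le_natCast_iff_exists_subset_range [Nonempty X] {m : ℕ} :
    s.encard ≤ m ↔ ∃ u : Fin m → X, s ⊆ range u := by
  constructor
  · intro h
    have := (finite_of_encard_le_coe h).fintype
    obtain ⟨e⟩ : Nonempty (s ↪ Fin m) := Function.Embedding.nonempty_of_card_le <| by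
      rw [Fintype.card_fin, ← ENat.natCast_le_natCast, ← ENat.card_eq_coe_fintype_card]
      exact h
    exact ⟨Function.extend e Subtype.val fun _ ↦ Classical.arbitrary X,
      fun x hx ↦ ⟨e ⟨x, hx⟩, e.injective.extend_apply _ _ _⟩⟩
  · rintro ⟨u, hu⟩
    simpa using (encard_le_encard hu).trans (encard_range_le_card u)

theorem externalCoveringNumber_le_natCast_iff [PseudoEMetricSpace X] [Nonempty X] {m : ℕ} :
    externalCoveringNumber r s ≤ m ↔ ∃ u : Fin m → X, IsCover r s (range u) :=
  calc externalCoveringNumber r s ≤ m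
    _ ↔ ∃ C : Set X, IsCover r s C ∧ C.encard ≤ m := by
      simp only [← ENat.lt_natCast_add_one_iff, externalCoveringNumber, iInf_lt_iff, exists_prop]
    _ ↔ ∃ u : Fin m → X, IsCover r s (range u) := by
      simp only [encard_le_natCast_iff_exists_subset_range]
      exact ⟨fun ⟨_, hC, u, hu⟩ ↦ ⟨u, hC.mono hu⟩, fun ⟨u, hu⟩ ↦ ⟨_, hu, u, subset_rfl⟩⟩

theorem card_le_externalCoveringNumber_of_pairwise_lt_dist [PseudoMetricSpace X] {ι : Type*}
    {p : ι → X} (hp : ∀ i, p i ∈ s) (hsep : Pairwise fun i j ↦ 2 * r < dist (p i) (p j)) :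
    ENat.card ι ≤ externalCoveringNumber r s := by
  have hinj : Function.Injective p := fun i j hij ↦ by
    by_contra hne
    have hdist : 2 * r < dist (p i) (p j) := hsep hne
    rw [hij, dist_self] at hdist
    exact hdist.not_ge (by positivity)
  have hseparated : IsSeparated (2 * r : ℝ≥0) (range p) := by
    rintro _ ⟨i, rfl⟩ _ ⟨j, rfl⟩ hne
    rw [edist_nndist, ENNReal.coe_lt_coe, ← NNReal.coe_lt_coe]
    exact_mod_cast hsep (ne_of_apply_ne p hne)
  calc ENat.card ι ≤ (range p).encard := hinj.encard_range
    _ ≤ packingNumber (2 * r) s := hseparated.encard_le_packingNumber (range_subset_iff.2 hp)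
    _ ≤ externalCoveringNumber r s := packingNumber_two_mul_le_externalCoveringNumber r s

end CoveringNumber

section CrossPolytope

theorem K1_eq_image_closedBall : K1 = ofLp '' closedBall (0 : ℓ¹(Fin 3)) 1 := by
  ext x
  constructor
  · intro hx
    exact ⟨toLp 1 x, by simpa [K1, PiLp.norm_eq_of_L1, Fin.sum_univ_three] using hx, rfl⟩
  · rintro ⟨y, hy, rfl⟩
    simpa [K1, PiLp.norm_eq_of_L1, Fin.sum_univ_three] using hy

theorem vadd_smul_K1_eq_image_closedBall {lam : ℝ} (hlam : 0 ≤ lam) (u : Fin 3 → ℝ) :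
    u +ᵥ lam • K1 = ofLp '' closedBall (toLp 1 u : ℓ¹(Fin 3)) lam := by
  rw [← affinity_unitClosedBall hlam, K1_eq_image_closedBall]
  simp only [← image_vadd, ← image_smul, image_image]
  rfl

theorem coversWith_iff_externalCoveringNumber_le {m : ℕ} {r : ℝ≥0} :
    CoversWith m r ↔ externalCoveringNumber r (closedBall (0 : ℓ¹(Fin 3)) 1) ≤ m := by
  have hcover (u : Fin m → ℓ¹(Fin 3)) : IsCover r (closedBall 0 1) (range u) ↔
      K1 ⊆ ⋃ i, (ofLp (u i) +ᵥ (r : ℝ) • K1) := by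
    have hball (i : Fin m) : ofLp (u i) +ᵥ (r : ℝ) • K1 = ofLp '' closedBall (u i) r :=
      vadd_smul_K1_eq_image_closedBall r.2 _
    rw [iUnion_congr hball, ← image_iUnion, K1_eq_image_closedBall,
      image_subset_image_iff (ofLp_injective 1), isCover_iff_subset_iUnion_closedBall,
      biUnion_range]
  rw [externalCoveringNumber_le_natCast_iff]
  exact ⟨fun ⟨u, hu⟩ ↦ ⟨fun i ↦ toLp 1 (u i), (hcover _).2 hu⟩,
    fun ⟨u, hu⟩ ↦ ⟨fun i ↦ ofLp (u i), (hcover u).1 hu⟩⟩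

end CrossPolytope

section UpperBound

variable {ι : Type*} [Fintype ι]

theorem exists_abs_sub_units_smul_eq (a : ℝ) : ∃ ε : ℤˣ, ∀ t : ℝ, |a - ε • t| = |(|a| - t)| := by
  obtain ha | ha := le_total 0 a
  · exact ⟨1, fun t ↦ by rw [one_smul, abs_of_nonneg ha]⟩
  · exact ⟨-1, fun t ↦ by rw [Units.neg_smul, one_smul, abs_of_nonpos ha, ← abs_neg]; ring_nf⟩

theorem exists_norm_sub_units_smul_eq (x : ℓ¹(ι)) :
    ∃ ε : ι → ℤˣ, ∀ t : ι → ℝ, ‖x - toLp 1 (ε • t)‖ = ∑ i, |(|x i| - t i)| := by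
  choose ε hε using fun i ↦ exists_abs_sub_units_smul_eq (x i)
  exact ⟨ε, fun t ↦ by simp [PiLp.norm_eq_of_L1, hε]⟩

theorem sum_abs_sub_single_eq_max [DecidableEq ι] (x : ℓ¹(ι)) (i : ι) (t : ℝ) :
    ∑ j, |(|x j| - (Pi.single i t : ι → ℝ) j)| = max (‖x‖ - t) (‖x‖ - 2 * |x i| + t) := by
  have hoff : ∀ j ∈ Finset.univ.erase i, |(|x j| - (Pi.single i t : ι → ℝ) j)| = |x j| :=
    fun j hj ↦ by simp [Finset.ne_of_mem_erase hj]
  rw [← Finset.add_sum_erase _ _ (Finset.mem_univ i), Finset.sum_congr rfl hoff,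
    Finset.sum_erase_eq_sub (Finset.mem_univ i), Pi.single_eq_same, PiLp.norm_eq_of_L1,
    abs_eq_max_neg, max_add]
  simp only [Real.norm_eq_abs]
  congr 1 <;> ring

theorem sum_abs_sub_eq_norm_sub_sum (x : ℓ¹(ι)) {t : ι → ℝ} (ht : ∀ i, t i ≤ |x i|) :
    ∑ i, |(|x i| - t i)| = ‖x‖ - ∑ i, t i := by
  simp [PiLp.norm_eq_of_L1, abs_of_nonneg (sub_nonneg.2 (ht _))]

/-- The centres of ten balls of radius `3 / 5` covering the unit ball: `±(2 / 5) eᵢ`, and the four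
points `(±1 / 5, ±1 / 5, 0)`. Signs are encoded as units of `ℤ`. -/
noncomputable def coveringCenters : Fin 3 × ℤˣ ⊕ ℤˣ × ℤˣ → ℓ¹(Fin 3) :=
  Sum.elim (fun (i, ε) ↦ toLp 1 (Pi.single i (ε • (2 / 5))))
    (fun (ε, δ) ↦ toLp 1 ![ε • (1 / 5), δ • (1 / 5), 0])

theorem encard_range_coveringCenters_le : (range coveringCenters).encard ≤ 10 :=
  calc (range coveringCenters).encard ≤ ENat.card (Fin 3 × ℤˣ ⊕ ℤˣ × ℤˣ) := encard_range_le_card _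
    _ = 10 := by
      rw [ENat.card_eq_coe_fintype_card]
      rfl

theorem coveringCenters_inl (ε : Fin 3 → ℤˣ) (i : Fin 3) :
    coveringCenters (.inl (i, ε i)) = toLp 1 (ε • Pi.single i (2 / 5)) := by
  ext j
  obtain rfl | hji := eq_or_ne j i <;> simp [coveringCenters, *]

theorem coveringCenters_inr (ε : Fin 3 → ℤˣ) :
    coveringCenters (.inr (ε 0, ε 1)) = toLp 1 (ε • ![1 / 5, 1 / 5, 0]) := by
  ext j
  fin_cases j <;> simp [coveringCenters]

theorem lt_abs_of_forall_add_two_mul_abs_lt_norm {x : ℓ¹(Fin 3)} {c : ℝ}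
    (hx : ∀ i, c + 2 * |x i| < ‖x‖) (i : Fin 3) : c < |x i| := by
  have hnorm : ‖x‖ = |x 0| + |x 1| + |x 2| := by simp [PiLp.norm_eq_of_L1, Fin.sum_univ_three]
  fin_cases i <;> simp only [Fin.reduceFinMk] <;> linarith [hx 0, hx 1, hx 2]

theorem isCover_range_coveringCenters :
    IsCover (3 / 5) (closedBall 0 1) (range coveringCenters) := by
  rw [isCover_iff_subset_iUnion_closedBall]
  intro x hx
  simp only [biUnion_range, mem_iUnion, mem_closedBall, dist_eq_norm, sub_zero] at hx ⊢
  obtain ⟨ε, hε⟩ := exists_norm_sub_units_smul_eq x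
  by_cases! haxis : ∃ i, ‖x‖ ≤ 1 / 5 + 2 * |x i|
  · obtain ⟨i, hi⟩ := haxis
    refine ⟨.inl (i, ε i), ?_⟩
    rw [coveringCenters_inl, hε, sum_abs_sub_single_eq_max]
    push_cast
    exact max_le (by linarith) (by linarith)
  · have hle (i : Fin 3) : (![1 / 5, 1 / 5, 0] : Fin 3 → ℝ) i ≤ |x i| :=
      calc (![1 / 5, 1 / 5, 0] : Fin 3 → ℝ) i ≤ 1 / 5 := by fin_cases i <;> simp
        _ ≤ |x i| := (lt_abs_of_forall_add_two_mul_abs_lt_norm haxis i).le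
    refine ⟨.inr (ε 0, ε 1), ?_⟩
    rw [coveringCenters_inr, hε, sum_abs_sub_eq_norm_sub_sum x hle]
    have hsum : ∑ i, (![1 / 5, 1 / 5, 0] : Fin 3 → ℝ) i = 2 / 5 := by
      simp only [Fin.sum_univ_three, Matrix.cons_val]
      norm_num
    push_cast
    linarith

end UpperBound

section LowerBound

theorem norm_toLp_intCast {ι : Type*} [Fintype ι] (z : ι → ℤ) :
    ‖(toLp 1 fun i ↦ (z i : ℝ) : ℓ¹(ι))‖ = (∑ i, |z i| : ℤ) := by
  simp [PiLp.norm_eq_of_L1]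

/-- Eleven points of the unit ball at pairwise distance at least `6 / 5`, in units of `1 / 5`. A
point of the unit sphere has distance at least `6 / 5` from all six vertices as soon as its
coordinates are at most `2 / 5` in absolute value, which leaves only the ten distances among the
last five points to arrange. -/
def separatedPoints : Fin 11 → Fin 3 → ℤ :=
  ![![5, 0, 0], ![-5, 0, 0], ![0, 5, 0], ![0, -5, 0], ![0, 0, 5], ![0, 0, -5],
    ![2, -1, -2], ![-2, -2, -1], ![-1, 2, -2], ![-2, 1, 2], ![2, 2, 1]]

theorem sum_abs_separatedPoints (i : Fin 11) : ∑ k, |separatedPoints i k| = 5 := by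
  revert i
  decide

theorem pairwise_six_le_sum_abs_sub_separatedPoints :
    Pairwise fun i j ↦ 6 ≤ ∑ k, |separatedPoints i k - separatedPoints j k| := by
  unfold Pairwise
  decide

theorem eleven_le_externalCoveringNumber {r : ℝ≥0} (hr : r < 3 / 5) :
    11 ≤ externalCoveringNumber r (closedBall (0 : ℓ¹(Fin 3)) 1) := by
  let p (i : Fin 11) : ℓ¹(Fin 3) := (5⁻¹ : ℝ) • toLp 1 fun k ↦ (separatedPoints i k : ℝ)
  have hp (i : Fin 11) : p i ∈ closedBall 0 1 := by
    simp only [p, mem_closedBall_zero_iff, norm_smul, norm_toLp_intCast, sum_abs_separatedPoints]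
    norm_num
  have hsep : Pairwise fun i j ↦ 2 * r < dist (p i) (p j) := fun i j hij ↦ by
    have hsix : (6 : ℝ) ≤ (∑ k, |separatedPoints i k - separatedPoints j k| : ℤ) :=
      mod_cast pairwise_six_le_sum_abs_sub_separatedPoints hij
    have hdist : dist (p i) (p j) =
        5⁻¹ * (∑ k, |separatedPoints i k - separatedPoints j k| : ℤ) := by
      rw [← norm_toLp_intCast]
      simp [p, dist_eq_norm, ← smul_sub, norm_smul, ← toLp_sub, Pi.sub_def]
    have hr_real : (r : ℝ) < 3 / 5 := mod_cast hr
    linarith [hr_real]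
  simpa using card_le_externalCoveringNumber_of_pairwise_lt_dist hp hsep

end LowerBound

theorem externalCoveringNumber_closedBall_le_ten_iff {r : ℝ≥0} :
    externalCoveringNumber r (closedBall (0 : ℓ¹(Fin 3)) 1) ≤ 10 ↔ 3 / 5 ≤ r := by
  refine ⟨fun h ↦ ?_, fun h ↦ ?_⟩
  · by_contra! hr
    exact absurd ((eleven_le_externalCoveringNumber hr).trans h) (by decide)
  · exact ((isCover_range_coveringCenters.mono_radius h).externalCoveringNumber_le_encard).trans
      encard_range_coveringCenters_le

/-- γ₁₀(K₁) = 3/5. -/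
theorem gamma_ten_eq_three_fifths :
    IsLeast {lam : ℝ | 0 < lam ∧ CoversWith 10 lam} (3 / 5) := by
  have hcovers (r : ℝ≥0) : CoversWith 10 r ↔ 3 / 5 ≤ r :=
    coversWith_iff_externalCoveringNumber_le.trans externalCoveringNumber_closedBall_le_ten_iff
  refine ⟨⟨by norm_num, mod_cast (hcovers (3 / 5)).2 le_rfl⟩, fun lam ⟨hpos, hcov⟩ ↦ ?_⟩
  lift lam to ℝ≥0 using hpos.le
  exact_mod_cast (hcovers lam).1 hcov
end

section
/- If T is an equilateral triangle in the two-dimensional plane, then γ₃(T) = 2/3, i.e., the smallest λ > 0 such that T can be covered by three translates of λT equals 2/3. -/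
open Pointwise

/-!
Place three copies of the triangle scaled by `2 / 3`, one in each corner: since the barycentric
coordinates of a point add up to `1`, one of them is at least `1 / 3`, and the copy at the
corresponding vertex contains that point. Conversely, in a translate of `lam • T` each barycentric
coordinate varies by at most `lam`. Of the three vertices and the centroid, two lie in the same
translate, and there is a coordinate in which they differ by at least `2 / 3`.
The same argument gives the ratio `1 - 1 / n` for `n` translates of a simplex with `n` vertices.
-/

section Simplex

variable {𝕜 E ι : Type*} [Field 𝕜] [LinearOrder 𝕜] [IsStrictOrderedRing 𝕜] [AddCommGroup E]
  [Module 𝕜 E] [Fintype ι]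

theorem image_linearCombination_stdSimplex (p : ι → E) :
    Fintype.linearCombination 𝕜 p '' stdSimplex 𝕜 ι = convexHull 𝕜 (Set.range p) := by
  classical
  rw [← convexHull_rangle_single_eq_stdSimplex, LinearMap.image_convexHull, ← Set.range_comp]
  congr 2 with i
  simp

theorem linearCombination_mem_convexHull_range (p : ι → E) {w : ι → 𝕜}
    (hw : w ∈ stdSimplex 𝕜 ι) :
    Fintype.linearCombination 𝕜 p w ∈ convexHull 𝕜 (Set.range p) :=
  image_linearCombination_stdSimplex (𝕜 := 𝕜) p ▸ Set.mem_image_of_mem _ hw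

theorem const_inv_card_mem_stdSimplex [Nonempty ι] :
    (fun _ ↦ (Fintype.card ι : 𝕜)⁻¹) ∈ stdSimplex 𝕜 ι :=
  ⟨fun _ ↦ by positivity, by simp⟩

theorem exists_inv_card_le_of_mem_stdSimplex [Nonempty ι] {w : ι → 𝕜}
    (hw : w ∈ stdSimplex 𝕜 ι) : ∃ i, (Fintype.card ι : 𝕜)⁻¹ ≤ w i := by
  obtain ⟨i, -, hi⟩ := Finset.exists_le_of_sum_le Finset.univ_nonempty
    (const_inv_card_mem_stdSimplex.2.trans hw.2.symm).le
  exact ⟨i, hi⟩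

theorem linearCombination_mem_vadd_smul_convexHull_range (p : ι → E) {w : ι → 𝕜}
    (hw : w ∈ stdSimplex 𝕜 ι) {lam : 𝕜} (hlam : 0 < lam) {i : ι} (hi : 1 - lam ≤ w i) :
    Fintype.linearCombination 𝕜 p w ∈
      (1 - lam) • p i +ᵥ lam • convexHull 𝕜 (Set.range p) := by
  classical
  set v : ι → 𝕜 := w - Pi.single i (1 - lam) with hv
  have hv_nonneg : ∀ j, 0 ≤ v j := fun j ↦ by
    obtain rfl | hj := eq_or_ne j i
    · simpa [hv] using hi
    · simpa [hv, hj] using hw.1 j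
  have hv_sum : ∑ j, v j = lam := by
    simp [hv, Finset.sum_sub_distrib, hw.2]
  have hv_mem : lam⁻¹ • v ∈ stdSimplex 𝕜 ι := by
    refine ⟨fun j ↦ mul_nonneg (inv_nonneg.2 hlam.le) (hv_nonneg j), ?_⟩
    simp only [Pi.smul_apply, smul_eq_mul, ← Finset.mul_sum, hv_sum, inv_mul_cancel₀ hlam.ne']
  refine ⟨_, Set.smul_mem_smul_set (linearCombination_mem_convexHull_range p hv_mem), ?_⟩
  simp [hv, smul_inv_smul₀ hlam.ne', Fintype.linearCombination_apply_single]

theorem convexHull_range_subset_iUnion_vadd_smul [Nonempty ι] (p : ι → E) {lam : 𝕜}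
    (hlam : 0 < lam) (hcard : 1 - (Fintype.card ι : 𝕜)⁻¹ ≤ lam) :
    convexHull 𝕜 (Set.range p) ⊆
      ⋃ i, ((1 - lam) • p i +ᵥ lam • convexHull 𝕜 (Set.range p)) := by
  rw [← image_linearCombination_stdSimplex]
  rintro _ ⟨w, hw, rfl⟩
  obtain ⟨i, hi⟩ := exists_inv_card_le_of_mem_stdSimplex hw
  rw [image_linearCombination_stdSimplex]
  exact Set.mem_iUnion.2
    ⟨i, linearCombination_mem_vadd_smul_convexHull_range p hw hlam (by linarith)⟩

theorem sub_le_of_mem_vadd_smul_convexHull_range {p : ι → E} (hp : AffineIndependent 𝕜 p)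
    {w w' : ι → 𝕜} (hsum : ∑ i, w i = ∑ i, w' i) {lam : 𝕜} (hlam : 0 ≤ lam) {u : E}
    (hw : Fintype.linearCombination 𝕜 p w ∈ u +ᵥ lam • convexHull 𝕜 (Set.range p))
    (hw' : Fintype.linearCombination 𝕜 p w' ∈ u +ᵥ lam • convexHull 𝕜 (Set.range p)) (i : ι) :
    w i - w' i ≤ lam := by
  rw [← image_linearCombination_stdSimplex] at hw hw'
  obtain ⟨_, ⟨_, ⟨v, hv, rfl⟩, rfl⟩, hvw⟩ := hw
  obtain ⟨_, ⟨_, ⟨v', hv', rfl⟩, rfl⟩, hvw'⟩ := hw'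
  have hcomb : Fintype.linearCombination 𝕜 p (w - w' - lam • (v - v')) = 0 := by
    simp only [map_sub, map_smul, ← hvw, ← hvw', vadd_eq_add]
    module
  have hcoord : w i - w' i - lam * (v i - v' i) = 0 :=
    hp.eq_zero_of_sum_eq_zero
      (by simp [Finset.sum_sub_distrib, ← Finset.mul_sum, hsum, hv.2, hv'.2]) hcomb i
      (Finset.mem_univ i)
  calc
    w i - w' i = lam * (v i - v' i) := sub_eq_zero.1 hcoord
    _ ≤ lam * 1 := by
      gcongr
      linarith [(mem_Icc_of_mem_stdSimplex hv i).2, hv'.1 i]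
    _ = lam := mul_one lam

theorem one_sub_inv_card_le_of_convexHull_range_subset_iUnion [Nonempty ι] {κ : Type*}
    [Finite κ] (hκ : Nat.card κ ≤ Fintype.card ι) {p : ι → E} (hp : AffineIndependent 𝕜 p) {lam : 𝕜}
    (hlam : 0 ≤ lam) {u : κ → E}
    (hu : convexHull 𝕜 (Set.range p) ⊆ ⋃ k, (u k +ᵥ lam • convexHull 𝕜 (Set.range p))) :
    1 - (Fintype.card ι : 𝕜)⁻¹ ≤ lam := by
  classical
  have hcover : ∀ w ∈ stdSimplex 𝕜 ι, ∃ k,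
      Fintype.linearCombination 𝕜 p w ∈ u k +ᵥ lam • convexHull 𝕜 (Set.range p) :=
    fun w hw ↦ Set.mem_iUnion.1 (hu (linearCombination_mem_convexHull_range p hw))
  have hvertex := single_mem_stdSimplex 𝕜 (ι := ι)
  choose f hf using fun i ↦ hcover _ (hvertex i)
  by_cases hinj : f.Injective
  · obtain ⟨k, hk⟩ := hcover _ const_inv_card_mem_stdSimplex
    obtain ⟨i, rfl⟩ := (hinj.bijective_of_nat_card_le (by simpa using hκ)).surjective k
    simpa using sub_le_of_mem_vadd_smul_convexHull_range hp
      ((hvertex i).2.trans const_inv_card_mem_stdSimplex.2.symm) hlam (hf i) hk i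
  · obtain ⟨i, j, hij, hne⟩ := Function.not_injective_iff.1 hinj
    have hone : 1 ≤ lam := by
      simpa [hne] using sub_le_of_mem_vadd_smul_convexHull_range hp
        ((hvertex i).2.trans (hvertex j).2.symm) hlam (hf i) (hij ▸ hf j) i
    exact (sub_le_self 1 (by positivity)).trans hone

theorem gamma_three_equilateral_triangle_general [Nontrivial ι] {p : ι → E}
    (hp : AffineIndependent 𝕜 p) :
    IsLeast {lam : 𝕜 | 0 < lam ∧ ∃ u : ι → E,
      convexHull 𝕜 (Set.range p) ⊆ ⋃ i, (u i +ᵥ lam • convexHull 𝕜 (Set.range p))}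
      (1 - (Fintype.card ι : 𝕜)⁻¹) := by
  have hpos : 0 < 1 - (Fintype.card ι : 𝕜)⁻¹ :=
    sub_pos.2 (inv_lt_one_of_one_lt₀ (by exact_mod_cast Fintype.one_lt_card))
  exact ⟨⟨hpos, _, convexHull_range_subset_iUnion_vadd_smul p hpos le_rfl⟩,
    fun _ ⟨hlam, _, hu⟩ ↦ one_sub_inv_card_le_of_convexHull_range_subset_iUnion
      Nat.card_eq_fintype_card.le hp hlam.le hu⟩

end Simplex

section Equilateral

variable {V P ι : Type*} [NormedAddCommGroup V] [InnerProductSpace ℝ V] [MetricSpace P]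
  [NormedAddTorsor V P]

theorem norm_weightedVSub_sq_of_pairwise_dist_eq {p : ι → P} {d : ℝ}
    (hp : Pairwise fun i j ↦ dist (p i) (p j) = d) {s : Finset ι} {w : ι → ℝ}
    (hw : ∑ i ∈ s, w i = 0) :
    ‖s.weightedVSub p w‖ ^ 2 = d ^ 2 / 2 * ∑ i ∈ s, w i ^ 2 := by
  classical
  have hdist : ∀ i j, dist (p i) (p j) * dist (p i) (p j) = d ^ 2 - if i = j then d ^ 2 else 0 := by
    intro i j
    obtain rfl | hij := eq_or_ne i j
    · simp
    · simp [hp hij, hij, sq]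
  have hinner : ∀ i ∈ s, ∑ j ∈ s, w i * w j * (dist (p i) (p j) * dist (p i) (p j)) =
      -(d ^ 2 * w i ^ 2) := by
    intro i hi
    simp only [hdist, mul_sub, Finset.sum_sub_distrib, ← Finset.sum_mul, ← Finset.mul_sum, hw,
      mul_ite, mul_zero, zero_mul, Finset.sum_ite_eq, hi, if_true]
    ring
  rw [← real_inner_self_eq_norm_sq, EuclideanGeometry.inner_weightedVSub p hw p hw,
    Finset.sum_congr rfl hinner, Finset.sum_neg_distrib, ← Finset.mul_sum]
  ring

theorem affineIndependent_of_pairwise_dist_eq {p : ι → P} {d : ℝ} (hd : d ≠ 0)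
    (hp : Pairwise fun i j ↦ dist (p i) (p j) = d) : AffineIndependent ℝ p := by
  intro s w hw hzero i hi
  have hsq : ∑ j ∈ s, w j ^ 2 = 0 := by
    simpa [hzero, hd] using norm_weightedVSub_sq_of_pairwise_dist_eq hp hw
  exact (pow_eq_zero_iff two_ne_zero).1
    ((Finset.sum_eq_zero_iff_of_nonneg fun j _ ↦ sq_nonneg (w j)).1 hsq i hi)

theorem affineIndependent_of_dist_eq_of_dist_eq {a b c : P} (hab : dist a b = dist b c)
    (hbc : dist b c = dist c a) (hne : dist a b ≠ 0) : AffineIndependent ℝ ![a, b, c] := by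
  refine affineIndependent_of_pairwise_dist_eq hne fun i j hij ↦ ?_
  fin_cases i <;> fin_cases j <;> simp_all [dist_comm]

end Equilateral

/-- γ₃(T) = 2/3 for every equilateral triangle `T` in the plane. -/
theorem gamma_three_equilateral_triangle (v₁ v₂ v₃ : EuclideanSpace ℝ (Fin 2))
    (h₁₂ : dist v₁ v₂ = dist v₂ v₃) (h₂₃ : dist v₂ v₃ = dist v₃ v₁)
    (hpos : 0 < dist v₁ v₂) :
    IsLeast {lam : ℝ | 0 < lam ∧ ∃ u : Fin 3 → EuclideanSpace ℝ (Fin 2),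
      convexHull ℝ {v₁, v₂, v₃} ⊆ ⋃ i, (u i +ᵥ lam • convexHull ℝ {v₁, v₂, v₃})}
      (2 / 3) := by
  have hvertices : Set.range ![v₁, v₂, v₃] = {v₁, v₂, v₃} := by
    simp only [Matrix.range_cons, Matrix.range_empty, Set.union_empty, Set.singleton_union]
  have hratio : 1 - (Fintype.card (Fin 3) : ℝ)⁻¹ = 2 / 3 := by norm_num
  rw [← hvertices, ← hratio]
  exact gamma_three_equilateral_triangle_general
    (affineIndependent_of_dist_eq_of_dist_eq h₁₂ h₂₃ hpos.ne')
end

section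
/- The optimal 3-covering configuration of an equilateral triangle is unique: if T = conv{v₁, v₂, v₃} is an equilateral triangle in the plane and t₁, t₂, t₃ ∈ ℝ² satisfy T ⊆ ∪_{i=1}^3 ((2/3)T + tᵢ), then {t₁, t₂, t₃} = {(1/3)v₁, (1/3)v₂, (1/3)v₃}; equivalently, the three covering triangles are exactly the three corner homothets vᵢ + (2/3)(T − vᵢ), i = 1, 2, 3. -/
open Pointwise

/-!
In barycentric coordinates, a homothetic copy of a simplex `T` with ratio `r` meets `T` in the
points `x` with `p ≤ x`, where the coordinates of `p` add up to `1 - r`. A copy containing the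
vertex `k` has `p j ≤ 0` for all `j ≠ k`, so different vertices lie in different copies, and the
copy at the vertex `k` has `1 - r ≤ p k`. Let `d k` be this `p k`. If `∑ k, d k` exceeded `1`, the
point of `T` with coordinates proportional to `d` would be uncovered. When the numbers `1 - r` of
all copies add up to `1`, this leaves room only for equality: `p` is `1 - r` times the vertex `k`.
-/

section StdSimplex

variable {𝕜 ι κ : Type*} [Field 𝕜] [LinearOrder 𝕜] [IsStrictOrderedRing 𝕜] [Fintype ι]

theorem sum_le_one_of_forall_mem_stdSimplex_exists_le {d : ι → 𝕜} (hd : ∀ k, 0 < d k)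
    (hcover : ∀ x ∈ stdSimplex 𝕜 ι, ∃ k, d k ≤ x k) : ∑ k, d k ≤ 1 := by
  by_contra! hsum
  have hsum_pos : 0 < ∑ k, d k := one_pos.trans hsum
  obtain ⟨k, hk⟩ := hcover (fun k => d k / ∑ l, d l)
    ⟨fun k => div_nonneg (hd k).le hsum_pos.le, by rw [← Finset.sum_div, div_self hsum_pos.ne']⟩
  exact (div_lt_self (hd k) hsum).not_ge hk

variable [DecidableEq ι]

theorem exists_embedding_forall_le_single {p : κ → ι → 𝕜} (hpos : ∀ i, 0 < ∑ j, p i j)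
    (hcover : ∀ x ∈ stdSimplex 𝕜 ι, ∃ i, p i ≤ x) :
    ∃ f : ι ↪ κ, ∀ k, p (f k) ≤ Pi.single k 1 := by
  choose f hf using fun k => hcover _ (single_mem_stdSimplex 𝕜 k)
  refine ⟨⟨f, fun k l hkl => ?_⟩, hf⟩
  by_contra hne
  refine (hpos (f k)).not_ge (Finset.sum_nonpos fun j _ => ?_)
  by_cases hjk : j = k
  · have hjl : j ≠ l := hjk ▸ hne
    simpa [hkl, hjl] using hf l j
  · simpa [hjk] using hf k j

theorem sum_le_apply_of_le_single {p : ι → 𝕜} {k : ι} {a : 𝕜} (hp : p ≤ Pi.single k a) :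
    ∑ j, p j ≤ p k := by
  rw [← Finset.add_sum_erase _ _ (Finset.mem_univ k), add_le_iff_nonpos_right]
  exact Finset.sum_nonpos fun j hj => by simpa [Finset.ne_of_mem_erase hj] using hp j

theorem eq_single_of_le_single {p : ι → 𝕜} {k : ι} {a : 𝕜} (hp : p ≤ Pi.single k a)
    (hsum : ∑ j, p j = p k) : p = Pi.single k (p k) := by
  have hle : ∀ j ∈ Finset.univ, p j ≤ (Pi.single k (p k) : ι → 𝕜) j := fun j _ => by
    by_cases hjk : j = k
    · simp [hjk]
    · simpa [hjk] using hp j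
  exact funext fun j =>
    (Finset.sum_eq_sum_iff_of_le hle).1 (by simpa using hsum) j (Finset.mem_univ j)

theorem exists_equiv_forall_eq_single [Fintype κ] {p : κ → ι → 𝕜}
    (hcard : Fintype.card κ ≤ Fintype.card ι) (hpos : ∀ i, 0 < ∑ j, p i j)
    (hsum : ∑ i, ∑ j, p i j = 1) (hcover : ∀ x ∈ stdSimplex 𝕜 ι, ∃ i, p i ≤ x) :
    ∃ σ : ι ≃ κ, ∀ k, p (σ k) = Pi.single k (∑ j, p (σ k) j) := by
  obtain ⟨f, hf⟩ := exists_embedding_forall_le_single hpos hcover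
  let σ : ι ≃ κ := Equiv.ofBijective f (f.injective.bijective_of_nat_card_le (by simpa using hcard))
  have hdiag (k : ι) : ∑ j, p (σ k) j ≤ p (σ k) k := sum_le_apply_of_le_single (hf k)
  have hdiag_sum : ∑ k, p (σ k) k ≤ 1 := by
    refine sum_le_one_of_forall_mem_stdSimplex_exists_le
      (fun k => (hpos _).trans_le (hdiag k)) fun x hx => ?_
    obtain ⟨i, hi⟩ := hcover x hx
    exact ⟨σ.symm i, by simpa using hi (σ.symm i)⟩
  have hrow_sum : ∑ k, ∑ j, p (σ k) j = 1 := (σ.sum_comp fun i => ∑ j, p i j).trans hsum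
  have hdiag_eq (k : ι) : ∑ j, p (σ k) j = p (σ k) k :=
    (Finset.sum_eq_sum_iff_of_le fun k _ => hdiag k).1
      ((Finset.sum_le_sum fun k _ => hdiag k).antisymm (hdiag_sum.trans hrow_sum.ge))
      k (Finset.mem_univ k)
  exact ⟨σ, fun k => hdiag_eq k ▸ eq_single_of_le_single (hf k) (hdiag_eq k)⟩

end StdSimplex

section LinearCombination

variable {𝕜 ι κ V : Type*} [Field 𝕜] [AddCommGroup V] [Module 𝕜 V] [Fintype ι] {v : ι → V}

theorem injOn_linearCombination_of_affineIndependent (hv : AffineIndependent 𝕜 v) (m : 𝕜) :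
    Set.InjOn (Fintype.linearCombination 𝕜 v) {w | ∑ j, w j = m} := by
  intro w hw w' hw' h
  rw [Set.mem_ofPred_eq] at hw hw'
  rw [← sub_eq_zero, ← map_sub, Fintype.linearCombination_apply] at h
  refine funext fun j => sub_eq_zero.1 ?_
  exact hv.eq_zero_of_sum_eq_zero (s := Finset.univ) (w := w - w') (by simp [hw, hw']) h j
    (Finset.mem_univ j)

/-- Translates outside the affine span of `v` have no coordinates; this gives them arbitrary ones,
so that every translate has a lower corner `p` of the right total mass. -/
theorem exists_sum_eq_and_forall_linearCombination_eq [Nonempty ι] (hv : AffineIndependent 𝕜 v)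
    (m : 𝕜) (x : V) :
    ∃ p : ι → 𝕜, ∑ j, p j = m ∧
      ∀ q : ι → 𝕜, ∑ j, q j = m → Fintype.linearCombination 𝕜 v q = x → q = p := by
  classical
  by_cases h : ∃ p : ι → 𝕜, ∑ j, p j = m ∧ Fintype.linearCombination 𝕜 v p = x
  · obtain ⟨p, hp, hpx⟩ := h
    exact ⟨p, hp, fun q hq hqx =>
      injOn_linearCombination_of_affineIndependent hv m hq hp (hqx.trans hpx.symm)⟩
  · exact ⟨Pi.single (Classical.arbitrary ι) m, by simp, fun q hq hqx => (h ⟨q, hq, hqx⟩).elim⟩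

variable [LinearOrder 𝕜] [IsStrictOrderedRing 𝕜]

theorem convexHull_range_eq_image_stdSimplex (v : ι → V) :
    convexHull 𝕜 (Set.range v) = Fintype.linearCombination 𝕜 v '' stdSimplex 𝕜 ι := by
  classical
  rw [← convexHull_rangle_single_eq_stdSimplex, LinearMap.image_convexHull, ← Set.range_comp]
  simp [Function.comp_def]

theorem exists_le_of_linearCombination_mem_vadd_smul {t : V} {r : 𝕜} (hr : 0 ≤ r) {x : ι → 𝕜}
    (hx : ∑ j, x j = 1)
    (hmem : Fintype.linearCombination 𝕜 v x ∈ t +ᵥ r • convexHull 𝕜 (Set.range v)) :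
    ∃ q ≤ x, ∑ j, q j = 1 - r ∧ Fintype.linearCombination 𝕜 v q = t := by
  rw [convexHull_range_eq_image_stdSimplex] at hmem
  obtain ⟨_, ⟨_, ⟨y, hy, rfl⟩, rfl⟩, htx⟩ := hmem
  refine ⟨x - r • y, sub_le_self _ (smul_nonneg hr hy.1), ?_, ?_⟩
  · simp [Finset.sum_sub_distrib, ← Finset.mul_sum, hx, hy.2]
  · rw [map_sub, map_smul, ← htx]
    simp

variable [Fintype κ] {t : κ → V}

theorem exists_equiv_eq_smul_of_convexHull_subset_iUnion (hv : AffineIndependent 𝕜 v)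
    (hcard : Fintype.card κ ≤ Fintype.card ι) {r : κ → 𝕜} (hr : ∀ i, r i < 1)
    (hsum : ∑ i, (1 - r i) = 1)
    (hcover : convexHull 𝕜 (Set.range v) ⊆ ⋃ i, (t i +ᵥ r i • convexHull 𝕜 (Set.range v))) :
    ∃ σ : ι ≃ κ, ∀ k, t (σ k) = (1 - r (σ k)) • v k := by
  classical
  have hr_nonneg (i : κ) : 0 ≤ r i := by
    have := Finset.single_le_sum (fun i _ => (sub_pos.2 (hr i)).le) (Finset.mem_univ i)
    linarith
  obtain ⟨i₀, -⟩ : ∃ i ∈ Finset.univ, 1 - r i ≠ 0 :=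
    Finset.exists_ne_zero_of_sum_ne_zero (hsum.trans_ne one_ne_zero)
  have : Nonempty ι := Fintype.card_pos_iff.1 ((Fintype.card_pos_iff.2 ⟨i₀⟩).trans_le hcard)
  choose p hp_sum hp_unique using fun i =>
    exists_sum_eq_and_forall_linearCombination_eq hv (1 - r i) (t i)
  have hp_cover {x : ι → 𝕜} (hx : x ∈ stdSimplex 𝕜 ι) :
      ∃ i, p i ≤ x ∧ Fintype.linearCombination 𝕜 v (p i) = t i := by
    have hmem : Fintype.linearCombination 𝕜 v x ∈ convexHull 𝕜 (Set.range v) :=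
      convexHull_range_eq_image_stdSimplex (𝕜 := 𝕜) v ▸ Set.mem_image_of_mem _ hx
    obtain ⟨i, hi⟩ := Set.mem_iUnion.1 (hcover hmem)
    obtain ⟨q, hqx, hq_sum, hqt⟩ :=
      exists_le_of_linearCombination_mem_vadd_smul (hr_nonneg i) hx.2 hi
    obtain rfl := hp_unique i q hq_sum hqt
    exact ⟨i, hqx, hqt⟩
  obtain ⟨σ, hσ⟩ := exists_equiv_forall_eq_single hcard
    (fun i => (hp_sum i).symm ▸ sub_pos.2 (hr i)) (by simpa only [hp_sum] using hsum)
    fun x hx => (hp_cover hx).imp fun _ => And.left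
  refine ⟨σ, fun k => ?_⟩
  obtain ⟨i, hik, hit⟩ := hp_cover (single_mem_stdSimplex 𝕜 k)
  obtain ⟨l, rfl⟩ := σ.surjective i
  rw [hσ, hp_sum] at hik hit
  obtain rfl : l = k := by
    by_contra hlk
    simpa [hlk, (hr (σ l)).not_ge] using hik l
  rw [← hit, Fintype.linearCombination_apply_single]

theorem unique_optimal_three_covering_general (hv : AffineIndependent 𝕜 v)
    (hcard : Fintype.card κ ≤ Fintype.card ι) {r : 𝕜} (hr : (1 - r) * Fintype.card κ = 1)
    (hcover : convexHull 𝕜 (Set.range v) ⊆ ⋃ i, (t i +ᵥ r • convexHull 𝕜 (Set.range v))) :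
    Set.range t = Set.range fun k => (1 - r) • v k := by
  have hr_lt : r < 1 :=
    sub_pos.1 (pos_of_mul_pos_left (hr.symm ▸ one_pos) (Nat.cast_nonneg _))
  obtain ⟨σ, hσ⟩ := exists_equiv_eq_smul_of_convexHull_subset_iUnion hv hcard
    (r := fun _ => r) (fun _ => hr_lt)
    (by simpa only [Finset.sum_const, Finset.card_univ, nsmul_eq_mul, mul_comm] using hr)
    hcover
  rw [← funext hσ]
  exact (σ.surjective.range_comp t).symm

end LinearCombination

theorem affineIndependent_of_dist_lt_add {V P : Type*} [SeminormedAddCommGroup V]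
    [NormedSpace ℝ V] [PseudoMetricSpace P] [NormedAddTorsor V P] {a b c : P}
    (hab : dist a b < dist b c + dist c a) (hbc : dist b c < dist c a + dist a b)
    (hca : dist c a < dist a b + dist b c) : AffineIndependent ℝ ![a, b, c] := by
  rw [affineIndependent_iff_not_collinear_set]
  intro hcol
  rcases hcol.wbtw_or_wbtw_or_wbtw with h | h | h
  · linarith [h.dist_add_dist, dist_comm a c]
  · linarith [h.dist_add_dist, dist_comm b a]
  · linarith [h.dist_add_dist, dist_comm c b]

theorem range_fin_three {α : Type*} (g : Fin 3 → α) : Set.range g = {g 0, g 1, g 2} := by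
  ext x
  simp [Fin.exists_fin_succ, eq_comm]

/-- The optimal 3-covering configuration of an equilateral triangle is unique: the three
translation vectors must be `(1/3)v₁, (1/3)v₂, (1/3)v₃`, i.e. the covering triangles are
the three corner homothets with ratio 2/3. -/
theorem unique_optimal_three_covering (v₁ v₂ v₃ : EuclideanSpace ℝ (Fin 2))
    (h₁₂ : dist v₁ v₂ = dist v₂ v₃) (h₂₃ : dist v₂ v₃ = dist v₃ v₁)
    (hpos : 0 < dist v₁ v₂) (t : Fin 3 → EuclideanSpace ℝ (Fin 2))
    (hcover : convexHull ℝ {v₁, v₂, v₃} ⊆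
      ⋃ i, (t i +ᵥ (2 / 3 : ℝ) • convexHull ℝ {v₁, v₂, v₃})) :
    ({t 0, t 1, t 2} : Set (EuclideanSpace ℝ (Fin 2))) =
      {(1 / 3 : ℝ) • v₁, (1 / 3 : ℝ) • v₂, (1 / 3 : ℝ) • v₃} := by
  have hv : AffineIndependent ℝ ![v₁, v₂, v₃] :=
    affineIndependent_of_dist_lt_add (by linarith) (by linarith) (by linarith)
  have h := unique_optimal_three_covering_general hv le_rfl (r := 2 / 3) (t := t) (by norm_num)
    (by rw [range_fin_three]; exact hcover)
  simpa [range_fin_three, show (1 - 2 / 3 : ℝ) = 1 / 3 by norm_num] using h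
end

section
/- The optimal 6-covering configuration of the unit cross-polytope K₁ is unique: if u₁, …, u₆ ∈ ℝ³ satisfy K₁ ⊆ ∪_{i=1}^6 ((2/3)K₁ + uᵢ), then {u₁, …, u₆} = {±(1/3, 0, 0), ±(0, 1/3, 0), ±(0, 0, 1/3)}. -/
open Pointwise

/-!
Write `n` for the dimension and `r = 1 - 1 / n`. If a ball of radius `r` contains both the vertex
`± e i` of the `ℓ¹` unit ball and a point `x` of the unit sphere, then `± x i ≥ 1 / n`. Hence
different vertices lie in different balls, so `2 * n` balls that cover the unit sphere correspond
bijectively to the vertices. On the open segment from a vertex `v` to the centroid of a facet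
through `v`, the signed coordinates in the directions of all other vertices are less than `1 / n`,
so this segment and, in the limit, the centroid lie in the ball containing `v`. The centroids of
two facets whose only common vertex is `v` are at distance `2 * r`, so the centre of that ball lies
on an `ℓ¹`-geodesic between them; together with the distance `r` to `v` this forces it to be
`v / n`.
-/

open Metric WithLp

section L1

variable {ι : Type*} [Fintype ι] {β : ι → Type*} [∀ i, SeminormedAddCommGroup (β i)]

lemma dist_single_add_norm_apply [DecidableEq ι] (i : ι) (a : β i) (x : PiLp 1 β) :
    dist (PiLp.single 1 i a) x + ‖x i‖ = dist a (x i) + ‖x‖ := by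
  have hne : ∀ j ∈ Finset.univ.erase i, dist (PiLp.single 1 i a j) (x j) = ‖x j‖ := fun j hj => by
    rw [PiLp.single_eq_of_ne 1 (Finset.ne_of_mem_erase hj), dist_zero_left]
  rw [PiLp.dist_eq_of_L1, PiLp.norm_eq_of_L1, ← Finset.add_sum_erase _ _ (Finset.mem_univ i),
    ← Finset.add_sum_erase _ (fun j => ‖x j‖) (Finset.mem_univ i), Finset.sum_congr rfl hne,
    PiLp.single_eq_same]
  ring

lemma dist_apply_add_dist_apply_le {p q c : PiLp 1 β} (h : dist p c + dist c q ≤ dist p q)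
    (i : ι) : dist (p i) (c i) + dist (c i) (q i) ≤ dist (p i) (q i) := by
  simp only [PiLp.dist_eq_of_L1, ← Finset.sum_add_distrib] at h
  have hle : ∀ j ∈ Finset.univ, dist (p j) (q j) ≤ dist (p j) (c j) + dist (c j) (q j) :=
    fun j _ => dist_triangle _ _ _
  exact ((Finset.sum_eq_sum_iff_of_le hle).mp (le_antisymm (Finset.sum_le_sum hle) h) i
    (Finset.mem_univ i)).ge

end L1

section Sign

lemma exists_units_int_iff {p : ℤˣ → Prop} : (∃ s, p s) ↔ p 1 ∨ p (-1) := by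
  refine ⟨fun ⟨s, hs⟩ => ?_, fun h => h.elim (⟨1, ·⟩) (⟨-1, ·⟩)⟩
  rcases Int.units_eq_one_or s with rfl | rfl
  exacts [.inl hs, .inr hs]

variable {R : Type*} [Ring R] (s : ℤˣ)

lemma abs_units_int_cast [LinearOrder R] [IsStrictOrderedRing R] : |((s : ℤ) : R)| = 1 := by
  rcases Int.units_eq_one_or s with rfl | rfl <;> simp

lemma units_int_cast_mul_self : ((s : ℤ) : R) * (s : ℤ) = 1 := by
  rw [← Int.cast_mul, Int.units_coe_mul_self, Int.cast_one]

end Sign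

section Vertex

variable {ι : Type*} [DecidableEq ι]

/-- The vertex `s • e i` of the `ℓ¹` unit ball, indexed by the pair `(i, s)`. Scaled by `1 / n`, the
vertices are the centres of the optimal covering. -/
noncomputable def crossVertex (v : ι × ℤˣ) : PiLp 1 fun _ : ι => ℝ :=
  PiLp.single 1 v.1 (v.2 : ℤ)

lemma smul_crossVertex (a : ℝ) (v : ι × ℤˣ) :
    a • crossVertex v = PiLp.single 1 v.1 (a * (v.2 : ℤ)) := by
  rw [crossVertex, ← PiLp.toLp_single, ← toLp_smul, ← Pi.single_smul, PiLp.toLp_single, smul_eq_mul]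

variable [Fintype ι]

lemma norm_crossVertex (v : ι × ℤˣ) : ‖crossVertex v‖ = 1 := by
  rw [crossVertex, PiLp.norm_single, Real.norm_eq_abs, abs_units_int_cast]

lemma one_sub_le_mul_apply_of_mem_closedBall {v : ι × ℤˣ} {c x : PiLp 1 fun _ : ι => ℝ} {r : ℝ}
    (hr : r < 1) (hx : ‖x‖ = 1) (hvc : crossVertex v ∈ closedBall c r) (hxc : x ∈ closedBall c r) :
    1 - r ≤ (v.2 : ℤ) * x v.1 := by
  obtain ⟨i, s⟩ := v
  have hdist : dist (crossVertex (i, s)) x ≤ 2 * r := by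
    linarith [dist_triangle_right (crossVertex (i, s)) x c, mem_closedBall.mp hvc,
      mem_closedBall.mp hxc]
  have hsplit : dist (crossVertex (i, s)) x + |s * x i| = |s - x i| + 1 := by
    rw [abs_mul, abs_units_int_cast, one_mul, ← hx]
    exact dist_single_add_norm_apply i _ x
  have hle : 1 - s * x i ≤ |s - x i| :=
    calc 1 - s * x i = s * (s - x i) := by rw [mul_sub, units_int_cast_mul_self]
      _ ≤ |s * (s - x i)| := le_abs_self _
      _ = |s - x i| := by rw [abs_mul, abs_units_int_cast, one_mul]
  rcases abs_cases (s * x i) with h | h <;> linarith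

end Vertex

section FacetCentroid

variable {ι : Type*} [Fintype ι]

/-- The centroid of the facet of the `ℓ¹` unit ball on which each `σ j * x j` is nonnegative.
The facets through the vertex `(i, s)` are those with `σ i = s`, and their centroids determine the
centre of the ball that covers this vertex. -/
noncomputable def facetCentroid (σ : ι → ℤˣ) : PiLp 1 fun _ : ι => ℝ :=
  toLp 1 fun j => (σ j : ℤ) / Fintype.card ι

lemma dist_facetCentroid {σ τ : ι → ℤˣ} {i : ι} (h : ∀ j, σ j = τ j ↔ j = i) :
    dist (facetCentroid σ) (facetCentroid τ) = 2 * (1 - 1 / Fintype.card ι) := by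
  classical
  have hcard : (Fintype.card ι : ℝ) ≠ 0 := by
    exact_mod_cast (Fintype.card_pos_iff.mpr ⟨i⟩).ne'
  have hcoord (j : ι) : dist (facetCentroid σ j) (facetCentroid τ j) =
      2 / Fintype.card ι - if j = i then (2 / Fintype.card ι : ℝ) else 0 := by
    by_cases hj : j = i
    · simp [facetCentroid, hj, (h i).mpr rfl]
    · have hneg : τ j = -σ j := Int.units_ne_iff_eq_neg.mp fun e => hj ((h j).mp e.symm)
      simp only [facetCentroid, hneg, hj, if_false, sub_zero, Real.dist_eq, Units.val_neg]
      push_cast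
      rw [← sub_div, sub_neg_eq_add, ← two_mul, abs_div, abs_mul, abs_units_int_cast]
      simp
  rw [PiLp.dist_eq_of_L1, Finset.sum_congr rfl fun j _ => hcoord j]
  simp only [Finset.sum_sub_distrib, Finset.sum_const, Finset.card_univ, nsmul_eq_mul,
    Finset.sum_ite_eq', Finset.mem_univ, if_true]
  field_simp

lemma apply_eq_of_facetCentroid_mem_closedBall {i : ι} {s : ℤˣ} {c : PiLp 1 fun _ : ι => ℝ}
    (h : ∀ σ : ι → ℤˣ, σ i = s → facetCentroid σ ∈ closedBall c (1 - 1 / Fintype.card ι)) :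
    c i = (s : ℤ) / Fintype.card ι := by
  classical
  let σ (t : ℤˣ) : ι → ℤˣ := Function.update (fun _ => t) i s
  have hσ (t : ℤˣ) : σ t i = s := Function.update_self ..
  have hdist := dist_facetCentroid (σ := σ 1) (τ := σ (-1)) (i := i) fun j => by
    by_cases hj : j = i <;> simp [σ, hj]
  have hgeod : dist (facetCentroid (σ 1)) c + dist c (facetCentroid (σ (-1))) ≤
      dist (facetCentroid (σ 1)) (facetCentroid (σ (-1))) := by
    linarith [mem_closedBall.mp (h _ (hσ 1)), mem_closedBall'.mp (h _ (hσ (-1)))]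
  have hcoord := dist_apply_add_dist_apply_le hgeod i
  simp only [facetCentroid, hσ, dist_self] at hcoord
  have hnonneg := dist_nonneg (x := ((s : ℤ) / Fintype.card ι : ℝ)) (y := c i)
  exact dist_le_zero.mp (by linarith)

end FacetCentroid

section Covering

variable {ι : Type*} [Fintype ι] [DecidableEq ι]

section Segment

variable (σ : ι → ℤˣ) (i : ι) {a b : ℝ}

lemma smul_facetCentroid_add_smul_crossVertex_apply (a b : ℝ) (j : ι) :
    (a • facetCentroid σ + b • crossVertex (i, σ i)) j =
      (σ j : ℤ) * (a / Fintype.card ι + if j = i then b else 0) := by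
  by_cases hj : j = i
  · subst hj
    simp only [facetCentroid, crossVertex, PiLp.add_apply, PiLp.smul_apply, PiLp.single_eq_same,
      smul_eq_mul, if_true]
    ring
  · simp only [facetCentroid, crossVertex, PiLp.add_apply, PiLp.smul_apply, hj,
      PiLp.single_eq_of_ne, smul_eq_mul, if_false, ne_eq, not_false_eq_true]
    ring

lemma norm_smul_facetCentroid_add_smul_crossVertex (ha : 0 ≤ a) (hb : 0 ≤ b) :
    ‖a • facetCentroid σ + b • crossVertex (i, σ i)‖ = a + b := by
  have hcard : (Fintype.card ι : ℝ) ≠ 0 := by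
    exact_mod_cast (Fintype.card_pos_iff.mpr ⟨i⟩).ne'
  have hcoord (j : ι) : ‖(a • facetCentroid σ + b • crossVertex (i, σ i)) j‖ =
      a / Fintype.card ι + if j = i then b else 0 := by
    rw [smul_facetCentroid_add_smul_crossVertex_apply, Real.norm_eq_abs, abs_mul,
      abs_units_int_cast, one_mul, abs_of_nonneg (by positivity)]
  rw [PiLp.norm_eq_of_L1, Finset.sum_congr rfl fun j _ => hcoord j, Finset.sum_add_distrib]
  simp [hcard, mul_div_cancel₀]

lemma mul_smul_facetCentroid_add_smul_crossVertex_apply_le (ha : 0 ≤ a) (hb : 0 ≤ b)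
    {w : ι × ℤˣ} (hw : w ≠ (i, σ i)) :
    (w.2 : ℤ) * (a • facetCentroid σ + b • crossVertex (i, σ i)) w.1 ≤ a / Fintype.card ι := by
  obtain ⟨j, s⟩ := w
  rw [smul_facetCentroid_add_smul_crossVertex_apply]
  by_cases hs : s = σ j
  · have hj : j ≠ i := by
      rintro rfl
      exact hw (congrArg _ hs)
    rw [← mul_assoc, hs, units_int_cast_mul_self, one_mul, if_neg hj, add_zero]
  · rw [← mul_assoc, Int.units_ne_iff_eq_neg.mp hs, Units.val_neg, Int.cast_neg, neg_mul,
      units_int_cast_mul_self]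
    have hnonneg : 0 ≤ a / Fintype.card ι := by positivity
    have hite : 0 ≤ if j = i then b else 0 := by positivity
    linarith

variable {i} {c : PiLp 1 fun _ : ι => ℝ}

lemma eq_of_crossVertex_mem_closedBall {w : ι × ℤˣ} (ha : 0 ≤ a) (hb : 0 < b) (hab : a + b = 1)
    (hw : crossVertex w ∈ closedBall c (1 - 1 / Fintype.card ι))
    (hx : a • facetCentroid σ + b • crossVertex (i, σ i) ∈
      closedBall c (1 - 1 / Fintype.card ι)) :
    w = (i, σ i) := by
  by_contra hne
  have hcard : (0 : ℝ) < 1 / Fintype.card ι :=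
    one_div_pos.mpr (by exact_mod_cast Fintype.card_pos_iff.mpr ⟨i⟩)
  have hlower := one_sub_le_mul_apply_of_mem_closedBall (by linarith)
    ((norm_smul_facetCentroid_add_smul_crossVertex σ i ha hb.le).trans hab) hw hx
  have hupper := mul_smul_facetCentroid_add_smul_crossVertex_apply_le σ i ha hb.le hne
  have hlt : a / Fintype.card ι < 1 / Fintype.card ι := by
    rw [div_eq_mul_one_div]
    exact mul_lt_of_lt_one_left hcard (by linarith)
  linarith

end Segment

lemma eq_smul_crossVertex_of_mem_closedBall {i : ι} {s : ℤˣ} {c : PiLp 1 fun _ : ι => ℝ}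
    (hv : crossVertex (i, s) ∈ closedBall c (1 - 1 / Fintype.card ι))
    (h : ∀ σ : ι → ℤˣ, σ i = s → facetCentroid σ ∈ closedBall c (1 - 1 / Fintype.card ι)) :
    c = (1 / Fintype.card ι : ℝ) • crossVertex (i, s) := by
  have hci : c i = (s : ℤ) / Fintype.card ι := apply_eq_of_facetCentroid_mem_closedBall h
  have hsmul : (1 / Fintype.card ι : ℝ) • crossVertex (i, s) = PiLp.single 1 i (c i) := by
    rw [smul_crossVertex, hci, one_div_mul_eq_div]
  have hsub : dist ((s : ℤ) : ℝ) (c i) = 1 - 1 / Fintype.card ι := by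
    have hle : 1 / (Fintype.card ι : ℝ) ≤ 1 := by
      rw [one_div]
      exact Nat.cast_inv_le_one _
    rw [Real.dist_eq, hci, div_eq_mul_one_div, ← mul_one_sub, abs_mul, abs_units_int_cast, one_mul,
      abs_of_nonneg (sub_nonneg.mpr hle)]
  have hvertex := dist_single_add_norm_apply i ((s : ℤ) : ℝ) c
  have hcentre := dist_single_add_norm_apply i (c i) c
  rw [dist_self] at hcentre
  rw [crossVertex, mem_closedBall] at hv
  rw [hsmul]
  exact (dist_le_zero.mp (by linarith)).symm

theorem unique_optimal_six_covering_general {κ : Type*} [Fintype κ]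
    (hκ : Fintype.card κ ≤ 2 * Fintype.card ι) (u : κ → PiLp 1 fun _ : ι => ℝ)
    (hcover : sphere 0 1 ⊆ ⋃ k, closedBall (u k) (1 - 1 / Fintype.card ι)) :
    Set.range u = Set.range fun v : ι × ℤˣ => (1 / Fintype.card ι : ℝ) • crossVertex v := by
  have hmem {x : PiLp 1 fun _ : ι => ℝ} (hx : ‖x‖ = 1) :
      ∃ k, x ∈ closedBall (u k) (1 - 1 / Fintype.card ι) :=
    Set.mem_iUnion.mp (hcover (mem_sphere_zero_iff_norm.mpr hx))
  choose f hf using fun v : ι × ℤˣ => hmem (norm_crossVertex v)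
  have hinj : f.Injective := fun w v hwv =>
    eq_of_crossVertex_mem_closedBall (σ := fun _ => v.2) le_rfl one_pos (zero_add 1) (hf w)
      (by simpa [hwv] using hf v)
  have hsurj : f.Surjective :=
    (hinj.bijective_of_nat_card_le (by simpa [mul_comm] using hκ)).surjective
  have hcentroid (σ : ι → ℤˣ) (i : ι) :
      facetCentroid σ ∈ closedBall (u (f (i, σ i))) (1 - 1 / Fintype.card ι) := by
    refine closure_minimal ?_ isClosed_closedBall
      (segment_subset_closure_openSegment (left_mem_segment ℝ _ (crossVertex (i, σ i))))
    rintro _ ⟨a, b, ha, hb, hab, rfl⟩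
    obtain ⟨k, hk⟩ :=
      hmem ((norm_smul_facetCentroid_add_smul_crossVertex σ i ha.le hb.le).trans hab)
    obtain ⟨w, rfl⟩ := hsurj k
    obtain rfl := eq_of_crossVertex_mem_closedBall σ ha.le hb hab (hf w) hk
    exact hk
  rw [← hsurj.range_comp u]
  refine congrArg Set.range (funext fun v => ?_)
  exact eq_smul_crossVertex_of_mem_closedBall (hf v) fun σ hσ => by simpa [hσ] using hcentroid σ v.1

end Covering

lemma K1_eq_preimage_closedBall : K1 = toLp 1 ⁻¹' closedBall 0 1 := by
  ext x
  simp [K1, PiLp.norm_eq_of_L1, Fin.sum_univ_three]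

lemma vadd_smul_K1 (c : Fin 3 → ℝ) {r : ℝ} (hr : 0 ≤ r) :
    c +ᵥ r • K1 = toLp 1 ⁻¹' closedBall (toLp 1 c) r := by
  let e := WithLp.linearEquiv 1 ℝ (Fin 3 → ℝ)
  have himage (s : Set (PiLp 1 fun _ : Fin 3 => ℝ)) : toLp 1 ⁻¹' s = e '' s :=
    (e.image_eq_preimage_symm s).symm
  rw [K1_eq_preimage_closedBall, himage, himage, ← affinity_unitClosedBall hr,
    ← image_smul_set, ← Set.image_vadd, ← Set.image_vadd, Set.image_image, Set.image_image]
  rfl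

lemma K1_subset_iUnion_iff {κ : Type*} {u : κ → Fin 3 → ℝ} {r : ℝ} (hr : 0 ≤ r) :
    K1 ⊆ ⋃ k, (u k +ᵥ r • K1) ↔ closedBall 0 1 ⊆ ⋃ k, closedBall (toLp 1 (u k)) r := by
  simp_rw [vadd_smul_K1 _ hr]
  rw [K1_eq_preimage_closedBall, ← Set.preimage_iUnion,
    (toLp_surjective 1).preimage_subset_preimage_iff]

lemma range_ofLp_smul_crossVertex_fin_three :
    Set.range (fun v : Fin 3 × ℤˣ => ofLp ((1 / 3 : ℝ) • crossVertex v)) =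
      ({![1/3, 0, 0], ![-(1/3), 0, 0], ![0, 1/3, 0], ![0, -(1/3), 0],
        ![0, 0, 1/3], ![0, 0, -(1/3)]} : Set (Fin 3 → ℝ)) := by
  have h0 (a : ℝ) : Pi.single (0 : Fin 3) a = ![a, 0, 0] := by ext i; fin_cases i <;> rfl
  have h1 (a : ℝ) : Pi.single (1 : Fin 3) a = ![0, a, 0] := by ext i; fin_cases i <;> rfl
  have h2 (a : ℝ) : Pi.single (2 : Fin 3) a = ![0, 0, a] := by ext i; fin_cases i <;> rfl
  ext x
  simp only [smul_crossVertex, PiLp.ofLp_single]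
  simp [h0, h1, h2, Fin.exists_fin_succ, exists_units_int_iff, or_assoc, eq_comm]

/-- The optimal 6-covering configuration of `K1` is unique: the six translation vectors
must be `±(1/3,0,0), ±(0,1/3,0), ±(0,0,1/3)`. -/
theorem unique_optimal_six_covering (u : Fin 6 → (Fin 3 → ℝ))
    (hcover : K1 ⊆ ⋃ i, (u i +ᵥ (2 / 3 : ℝ) • K1)) :
    Set.range u = ({![1/3, 0, 0], ![-(1/3), 0, 0], ![0, 1/3, 0], ![0, -(1/3), 0],
      ![0, 0, 1/3], ![0, 0, -(1/3)]} : Set (Fin 3 → ℝ)) := by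
  have hradius : (2 / 3 : ℝ) = 1 - 1 / Fintype.card (Fin 3) := by norm_num
  rw [K1_subset_iUnion_iff (by norm_num), hradius] at hcover
  have hrange := unique_optimal_six_covering_general (by simp) (fun k => toLp 1 (u k))
    (sphere_subset_closedBall.trans hcover)
  rw [← range_ofLp_smul_crossVertex_fin_three]
  simpa [← Set.range_comp, Function.comp_def] using congrArg (ofLp '' ·) hrange
end

section
/- Let F₁, F₂ be two facets of K₁ whose intersection is exactly one vertex v of K₁ (i.e., F₁ ∩ F₂ = {v}), and let c₁, c₂ be their centres. If c₁, c₂ ∈ λK₁ + u for some λ > 0 and u ∈ ℝ³, then λ ≥ 2/3. -/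
open Pointwise

/-- The six vertices of the unit cross-polytope. -/
def K1Vertices : Set (Fin 3 → ℝ) :=
  {![1, 0, 0], ![-1, 0, 0], ![0, 1, 0], ![0, -1, 0], ![0, 0, 1], ![0, 0, -1]}

/-- The facet of `K1` determined by a sign vector `e` (each `e i` being `1` or `-1`). -/
def K1Facet (e : Fin 3 → ℝ) : Set (Fin 3 → ℝ) :=
  convexHull ℝ {![e 0, 0, 0], ![0, e 1, 0], ![0, 0, e 2]}

/-- The centre (centroid) of the facet determined by the sign vector `e`. -/
noncomputable def K1FacetCentre (e : Fin 3 → ℝ) : Fin 3 → ℝ :=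
  (1 / 3 : ℝ) • (![e 0, 0, 0] + ![0, e 1, 0] + ![0, 0, e 2])

/-!
The centres of two facets lie at `ℓ¹`-distance `2 d / 3`, where `d` is the number of coordinates in
which the sign vectors of the facets differ. A vertex `± eᵢ` is common to both facets as soon as
the sign vectors agree at `i`, so facets sharing at most one vertex have `d ≥ 2` and centres at
distance at least `4 / 3`. Since `λ K₁ + u` has `ℓ¹`-diameter at most `2 λ`, the bound follows.
-/

theorem card_le_hammingDist_add_one {ι : Type*} {β : ι → Type*} [Fintype ι]
    [∀ i, DecidableEq (β i)] {x y : ∀ i, β i} (h : {i | x i = y i}.Subsingleton) :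
    Fintype.card ι ≤ hammingDist x y + 1 := by
  have agree_le_one : (Finset.univ.filter fun i => x i = y i).card ≤ 1 :=
    Finset.card_le_one_iff_subsingleton.mpr (by simpa using h)
  have agree_add_differ : (Finset.univ.filter fun i => x i = y i).card + hammingDist x y =
      Fintype.card ι :=
    Finset.card_filter_add_card_filter_not _
  lia

theorem sum_abs_sub_eq_two_mul_hammingDist {ι R : Type*} [Fintype ι] [Ring R] [LinearOrder R]
    [IsStrictOrderedRing R] {x y : ι → R} (hx : ∀ i, x i = 1 ∨ x i = -1)
    (hy : ∀ i, y i = 1 ∨ y i = -1) : ∑ i, |x i - y i| = 2 * hammingDist x y := by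
  have abs_sub_eq (i : ι) : |x i - y i| = 2 * if x i ≠ y i then 1 else 0 := by
    rcases hx i with h | h <;> rcases hy i with h' | h' <;> rw [h, h'] <;> norm_num
  simp_rw [abs_sub_eq, ← Finset.mul_sum, Finset.sum_boole, hammingDist]

theorem seminorm_sub_le_of_mem_closedBall {𝕜 E : Type*} [SeminormedRing 𝕜] [AddCommGroup E]
    [Module 𝕜 E] (p : Seminorm 𝕜 E) {u x y : E} {r : ℝ} (hx : x ∈ p.closedBall u r)
    (hy : y ∈ p.closedBall u r) : p (x - y) ≤ 2 * r := by
  rw [Seminorm.mem_closedBall] at hx hy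
  calc p (x - y) = p ((x - u) - (y - u)) := by rw [sub_sub_sub_cancel_right]
    _ ≤ p (x - u) + p (y - u) := map_sub_le_add p _ _
    _ ≤ 2 * r := by linarith

/-- The `ℓ¹`-norm on `ι → ℝ`, as a seminorm because `ι → ℝ` itself carries the sup norm. -/
noncomputable def l1Seminorm (ι : Type*) [Fintype ι] : Seminorm ℝ (ι → ℝ) :=
  (normSeminorm ℝ (PiLp 1 fun _ : ι => ℝ)).comp (WithLp.linearEquiv 1 ℝ (ι → ℝ)).symm.toLinearMap

theorem l1Seminorm_apply {ι : Type*} [Fintype ι] (x : ι → ℝ) : l1Seminorm ι x = ∑ i, |x i| := by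
  simp [l1Seminorm, PiLp.norm_eq_of_L1]

theorem K1_eq_l1Seminorm_closedBall : K1 = (l1Seminorm (Fin 3)).closedBall 0 1 := by
  ext x
  simp [K1, l1Seminorm_apply, Fin.sum_univ_three]

theorem vadd_smul_K1_subset_closedBall (u : Fin 3 → ℝ) (c : ℝ) :
    u +ᵥ c • K1 ⊆ (l1Seminorm (Fin 3)).closedBall u |c| := by
  have smul_subset : c • K1 ⊆ (l1Seminorm (Fin 3)).closedBall 0 |c| := by
    simpa [K1_eq_l1Seminorm_closedBall] using
      (l1Seminorm (Fin 3)).smul_closedBall_subset (k := c) (r := 1)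
  simpa [Seminorm.vadd_closedBall] using Set.vadd_set_mono (a := u) smul_subset

theorem K1FacetCentre_eq_smul (e : Fin 3 → ℝ) : K1FacetCentre e = (1 / 3 : ℝ) • e := by
  ext i
  fin_cases i <;> simp [K1FacetCentre]

theorem l1Seminorm_K1FacetCentre_sub {e₁ e₂ : Fin 3 → ℝ} (he₁ : ∀ i, e₁ i = 1 ∨ e₁ i = -1)
    (he₂ : ∀ i, e₂ i = 1 ∨ e₂ i = -1) :
    l1Seminorm (Fin 3) (K1FacetCentre e₁ - K1FacetCentre e₂) = 2 / 3 * hammingDist e₁ e₂ := by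
  calc l1Seminorm (Fin 3) (K1FacetCentre e₁ - K1FacetCentre e₂)
      = 1 / 3 * l1Seminorm (Fin 3) (e₁ - e₂) := by
        rw [K1FacetCentre_eq_smul, K1FacetCentre_eq_smul, ← smul_sub, map_smul_eq_mul,
          Real.norm_of_nonneg (by norm_num)]
    _ = 1 / 3 * (2 * hammingDist e₁ e₂) := by
        simp only [l1Seminorm_apply, Pi.sub_apply, sum_abs_sub_eq_two_mul_hammingDist he₁ he₂]
    _ = 2 / 3 * hammingDist e₁ e₂ := by ring

theorem single_mem_K1Facet (e : Fin 3 → ℝ) (i : Fin 3) : Pi.single i (e i) ∈ K1Facet e := by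
  have single_mem_vertices : Pi.single i (e i) ∈
      ({![e 0, 0, 0], ![0, e 1, 0], ![0, 0, e 2]} : Set (Fin 3 → ℝ)) := by
    fin_cases i <;> simp [funext_iff, Fin.forall_fin_succ]
  exact subset_convexHull ℝ _ single_mem_vertices

theorem subsingleton_setOf_eq_of_subsingleton_K1Facet_inter {e₁ e₂ : Fin 3 → ℝ}
    (he₁ : ∀ i, e₁ i ≠ 0) (h : (K1Facet e₁ ∩ K1Facet e₂).Subsingleton) :
    {i | e₁ i = e₂ i}.Subsingleton := by
  have single_mem_inter {k : Fin 3} (hk : e₁ k = e₂ k) :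
      Pi.single k (e₁ k) ∈ K1Facet e₁ ∩ K1Facet e₂ :=
    ⟨single_mem_K1Facet e₁ k, hk ▸ single_mem_K1Facet e₂ k⟩
  intro i hi j hj
  by_contra hij
  have vertices_eq : (Pi.single i (e₁ i) : Fin 3 → ℝ) = Pi.single j (e₁ j) :=
    h (single_mem_inter hi) (single_mem_inter hj)
  have coord_eq_zero : e₁ i = 0 := by simpa [hij] using congrFun vertices_eq i
  exact he₁ i coord_eq_zero

theorem hammingDist_div_three_le_abs_of_K1FacetCentre_mem {e₁ e₂ : Fin 3 → ℝ}
    (he₁ : ∀ i, e₁ i = 1 ∨ e₁ i = -1) (he₂ : ∀ i, e₂ i = 1 ∨ e₂ i = -1) {c : ℝ} {u : Fin 3 → ℝ}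
    (hc₁ : K1FacetCentre e₁ ∈ u +ᵥ c • K1) (hc₂ : K1FacetCentre e₂ ∈ u +ᵥ c • K1) :
    (hammingDist e₁ e₂ : ℝ) / 3 ≤ |c| := by
  have dist_le : l1Seminorm (Fin 3) (K1FacetCentre e₁ - K1FacetCentre e₂) ≤ 2 * |c| :=
    seminorm_sub_le_of_mem_closedBall _ (vadd_smul_K1_subset_closedBall u c hc₁)
      (vadd_smul_K1_subset_closedBall u c hc₂)
  rw [l1Seminorm_K1FacetCentre_sub he₁ he₂] at dist_le
  linarith

theorem ratio_ge_two_thirds_of_two_centres_general {e₁ e₂ : Fin 3 → ℝ}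
    (he₁ : ∀ i, e₁ i = 1 ∨ e₁ i = -1) (he₂ : ∀ i, e₂ i = 1 ∨ e₂ i = -1)
    (hint : (K1Facet e₁ ∩ K1Facet e₂).Subsingleton) {lam : ℝ} {u : Fin 3 → ℝ}
    (hc₁ : K1FacetCentre e₁ ∈ u +ᵥ lam • K1) (hc₂ : K1FacetCentre e₂ ∈ u +ᵥ lam • K1) :
    2 / 3 ≤ |lam| := by
  have he₁_ne_zero (i : Fin 3) : e₁ i ≠ 0 := by rcases he₁ i with h | h <;> simp [h]
  have two_le_hammingDist : 2 ≤ hammingDist e₁ e₂ := by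
    simpa using card_le_hammingDist_add_one
      (subsingleton_setOf_eq_of_subsingleton_K1Facet_inter he₁_ne_zero hint)
  calc (2 / 3 : ℝ) ≤ hammingDist e₁ e₂ / 3 := by gcongr; exact_mod_cast two_le_hammingDist
    _ ≤ |lam| := hammingDist_div_three_le_abs_of_K1FacetCentre_mem he₁ he₂ hc₁ hc₂

/-- If `λ • K1 + u` contains the centres of two facets of `K1` whose intersection is exactly
one vertex `v` of `K1`, then `λ ≥ 2/3`. -/
theorem ratio_ge_two_thirds_of_two_centres
    (e₁ e₂ : Fin 3 → ℝ)
    (he₁ : ∀ i, e₁ i = 1 ∨ e₁ i = -1) (he₂ : ∀ i, e₂ i = 1 ∨ e₂ i = -1)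
    (v : Fin 3 → ℝ) (hv : v ∈ K1Vertices)
    (hint : K1Facet e₁ ∩ K1Facet e₂ = {v})
    (lam : ℝ) (hlam : 0 < lam) (u : Fin 3 → ℝ)
    (hc₁ : K1FacetCentre e₁ ∈ u +ᵥ lam • K1)
    (hc₂ : K1FacetCentre e₂ ∈ u +ᵥ lam • K1) :
    2 / 3 ≤ lam := by
  simpa only [abs_of_pos hlam] using ratio_ge_two_thirds_of_two_centres_general he₁ he₂
    (hint ▸ Set.subsingleton_singleton) hc₁ hc₂
end

section
/- Let F₁, F₂ be two facets of K₁ that do not intersect (i.e., F₁ ∩ F₂ = ∅), and let c₁, c₂ be their centres. If c₁, c₂ ∈ λK₁ + u for some λ > 0 and u ∈ ℝ³, then λ ≥ 1. -/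
open Pointwise

/-!
A dilate `lam • K1 + u` is a ball of radius `lam` for the ℓ¹-norm. Two facets whose sign vectors
agree in some coordinate share the corresponding vertex, so disjoint facets have opposite sign
vectors and hence antipodal centres `c`, `-c`. These are at distance `2 * ‖c‖ = 2`, and this
distance is at most `2 * lam` since both centres lie in the ball.
-/

theorem norm_le_of_mem_closedBall_of_neg_mem_closedBall {E : Type*} [SeminormedAddCommGroup E]
    [NormedSpace ℝ E] {c u : E} {r : ℝ} (hc : c ∈ Metric.closedBall u r)
    (hc' : -c ∈ Metric.closedBall u r) : ‖c‖ ≤ r := by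
  have hdist : dist c (-c) = 2 * ‖c‖ := by
    rw [dist_eq_norm, sub_neg_eq_add, ← two_smul ℝ c, norm_smul, Real.norm_two]
  linarith [dist_triangle_right c (-c) u, Metric.mem_closedBall.mp hc, Metric.mem_closedBall.mp hc']

theorem mem_K1_iff_norm_toLp_le_one {x : Fin 3 → ℝ} : x ∈ K1 ↔ ‖WithLp.toLp 1 x‖ ≤ 1 := by
  simp [K1, PiLp.norm_eq_of_L1, Fin.sum_univ_three]

theorem toLp_mem_closedBall_of_mem_vadd_smul_K1 {r : ℝ} (hr : 0 ≤ r) {u x : Fin 3 → ℝ}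
    (hx : x ∈ u +ᵥ r • K1) :
    WithLp.toLp 1 x ∈ Metric.closedBall (WithLp.toLp 1 u) r := by
  obtain ⟨_, ⟨y, hy, rfl⟩, rfl⟩ := hx
  have hy_norm : ‖WithLp.toLp 1 y‖ ≤ 1 := mem_K1_iff_norm_toLp_le_one.mp hy
  simpa [norm_smul, abs_of_nonneg hr] using mul_le_of_le_one_right hr hy_norm

theorem eq_neg_of_disjoint_K1Facet {e₁ e₂ : Fin 3 → ℝ} (habs : ∀ i, |e₁ i| = |e₂ i|)
    (hdisj : Disjoint (K1Facet e₁) (K1Facet e₂)) : e₂ = -e₁ := by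
  ext i
  have hne : e₂ i ≠ e₁ i := fun h ↦
    hdisj.notMem_of_mem_left (single_mem_K1Facet e₁ i) (h ▸ single_mem_K1Facet e₂ i)
  exact (abs_eq_abs.mp (habs i).symm).resolve_left hne

theorem K1FacetCentre_neg (e : Fin 3 → ℝ) : K1FacetCentre (-e) = -K1FacetCentre e := by
  simp only [K1FacetCentre_eq_smul, smul_neg]

theorem norm_toLp_K1FacetCentre {e : Fin 3 → ℝ} (he : ∀ i, |e i| = 1) :
    ‖WithLp.toLp 1 (K1FacetCentre e)‖ = 1 := by
  simp [K1FacetCentre_eq_smul, PiLp.norm_eq_of_L1, he]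

/-- If `λ • K1 + u` contains the centres of two disjoint facets of `K1`, then `λ ≥ 1`. -/
theorem ratio_ge_one_of_two_opposite_centres
    (e₁ e₂ : Fin 3 → ℝ)
    (he₁ : ∀ i, e₁ i = 1 ∨ e₁ i = -1) (he₂ : ∀ i, e₂ i = 1 ∨ e₂ i = -1)
    (hint : K1Facet e₁ ∩ K1Facet e₂ = ∅)
    (lam : ℝ) (hlam : 0 < lam) (u : Fin 3 → ℝ)
    (hc₁ : K1FacetCentre e₁ ∈ u +ᵥ lam • K1)
    (hc₂ : K1FacetCentre e₂ ∈ u +ᵥ lam • K1) :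
    1 ≤ lam := by
  have habs₁ : ∀ i, |e₁ i| = 1 := fun i ↦ (abs_eq zero_le_one).mpr (he₁ i)
  have habs₂ : ∀ i, |e₂ i| = 1 := fun i ↦ (abs_eq zero_le_one).mpr (he₂ i)
  have hopp : e₂ = -e₁ := eq_neg_of_disjoint_K1Facet (fun i ↦ (habs₁ i).trans (habs₂ i).symm)
    (Set.disjoint_iff_inter_eq_empty.mpr hint)
  rw [hopp, K1FacetCentre_neg] at hc₂
  calc 1 = ‖WithLp.toLp 1 (K1FacetCentre e₁)‖ := (norm_toLp_K1FacetCentre habs₁).symm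
    _ ≤ lam := norm_le_of_mem_closedBall_of_neg_mem_closedBall
        (toLp_mem_closedBall_of_mem_vadd_smul_K1 hlam.le hc₁)
        (toLp_mem_closedBall_of_mem_vadd_smul_K1 hlam.le hc₂)
end
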